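/- Gaussian identities for the standard normal distribution function: (a) for every t ∈ ℝ, ∫_ℝ Φ(x + t) dγ(x) = Φ(t/√2); (b) for every ρ ∈ [-1,1], ∫∫ Φ(x) · Φ(ρ·x + √(1−ρ²)·y) dγ(x) dγ(y) = 1/4 + (1/(2π)) · arcsin(ρ/2) (i.e. h_{Φ,Φ}(ρ) = 1/4 + arcsin(ρ/2)/(2π)). -/

import Mathlib

open MeasureTheory ProbabilityTheory

/-- The standard normal density. -/
noncomputable def stdPhi (x : ℝ) : ℝ :=
  Real.exp (-(x ^ 2) / 2) / Real.sqrt (2 * Real.pi)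

/-- The standard normal distribution function. -/
noncomputable def stdCdf (x : ℝ) : ℝ := ∫ t in Set.Iic x, stdPhi t

/-!
Everything is read off from the rotation invariance of the standard Gaussian measure `γ ⊗ γ` on the
plane. The integral of `Φ (a x + b)` is the measure of the half-plane `y ≤ a x + b`, which a
rotation turns into the horizontal half-plane at the same distance from the origin. Likewise, for
integrable `g`, the integral of `Φ(x) g(x)` is the integral of `g(x)` over the half-plane `y ≤ x`,
which a rotation by `π / 4` turns into the integral of `g((x + y) / √2)` over `x ≥ 0`. For
`g(x) = Φ(c x)` the half-plane formula evaluates the inner integral as `Φ(k x)` with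
`k = c / √(2 + c²)`, and the integral of `Φ(k x)` over `x ≥ 0` is the measure of the wedge
`{x ≥ 0, y ≤ k x}`, that is, its opening angle `π / 2 + arctan k` divided by `2 π`.
-/

open scoped Real

local notation "γ" => gaussianReal 0 1

theorem stdPhi_eq_gaussianPDFReal : stdPhi = gaussianPDFReal 0 1 := by
  ext x
  simp [stdPhi, gaussianPDFReal, div_eq_inv_mul]

theorem stdCdf_eq_cdf (x : ℝ) : stdCdf x = cdf γ x := by
  rw [cdf_eq_real, measureReal_def, gaussianReal_apply_eq_integral _ one_ne_zero,
    ENNReal.toReal_ofReal (integral_nonneg fun _ => gaussianPDFReal_nonneg _ _ _), stdCdf,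
    stdPhi_eq_gaussianPDFReal]

theorem integral_cdf_comp_mul_eq_setIntegral_prod {α : Type*} [MeasurableSpace α]
    {μ : Measure α} [SFinite μ] {ν : Measure ℝ} [IsProbabilityMeasure ν] {f g : α → ℝ}
    (hf : Measurable f) (hg : Integrable g μ) :
    ∫ x, cdf ν (f x) * g x ∂μ = ∫ p in {p : α × ℝ | p.2 ≤ f p.1}, g p.1 ∂(μ.prod ν) := by
  have hS : MeasurableSet {p : α × ℝ | p.2 ≤ f p.1} :=
    measurableSet_le measurable_snd (hf.comp measurable_fst)
  rw [← integral_indicator hS, integral_prod _ ((hg.comp_fst ν).indicator hS)]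
  congr with x
  calc cdf ν (f x) * g x
      = ∫ _ in Set.Iic (f x), g x ∂ν := by rw [setIntegral_const, cdf_eq_real, smul_eq_mul]
    _ = ∫ y, {p : α × ℝ | p.2 ≤ f p.1}.indicator (fun p => g p.1) (x, y) ∂ν :=
        (integral_indicator measurableSet_Iic).symm

theorem map_rotation_gaussianReal_prod (θ : ℝ) :
    (Measure.prod γ γ).map (ContinuousLinearMap.rotation θ) = Measure.prod γ γ :=
  IsGaussian.map_rotation_eq_self (by simp) θ

theorem integral_cdf_gaussianReal_mul_add (a b : ℝ) :
    ∫ x, cdf γ (a * x + b) ∂γ = cdf γ (b / √(1 + a ^ 2)) := by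
  have hs : 0 < √(1 + a ^ 2) := by positivity
  have half_plane_preimage : ContinuousLinearMap.rotation (Real.arctan a) ⁻¹'
      (Set.univ ×ˢ Set.Iic (b / √(1 + a ^ 2))) = {p : ℝ × ℝ | p.2 ≤ a * p.1 + b} := by
    ext p
    simp only [Set.mem_preimage, ContinuousLinearMap.rotation_apply, Real.cos_arctan,
      Real.sin_arctan, Set.mem_prod, Set.mem_univ, true_and, Set.mem_Iic, Set.mem_ofPred_eq,
      smul_eq_mul]
    rw [le_div_iff₀ hs]
    field_simp
    constructor <;> intro h <;> linarith
  calc ∫ x, cdf γ (a * x + b) ∂γ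
      = (Measure.prod γ γ).real {p | p.2 ≤ a * p.1 + b} := by
        simpa using integral_cdf_comp_mul_eq_setIntegral_prod (μ := γ) (ν := γ)
          (f := fun x => a * x + b) (by fun_prop) (integrable_const (1 : ℝ))
    _ = (Measure.prod γ γ).real (Set.univ ×ˢ Set.Iic (b / √(1 + a ^ 2))) := by
        rw [← half_plane_preimage, ← map_measureReal_apply (by fun_prop)
          (MeasurableSet.univ.prod measurableSet_Iic), map_rotation_gaussianReal_prod]
    _ = cdf γ (b / √(1 + a ^ 2)) := by
        rw [measureReal_prod_prod, probReal_univ, one_mul, cdf_eq_real]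

theorem integral_gaussianReal_prod {E : Type*} [NormedAddCommGroup E] [NormedSpace ℝ E]
    {m₁ m₂ : ℝ} {v₁ v₂ : NNReal} (hv₁ : v₁ ≠ 0) (hv₂ : v₂ ≠ 0) (f : ℝ × ℝ → E) :
    ∫ p, f p ∂((gaussianReal m₁ v₁).prod (gaussianReal m₂ v₂)) =
      ∫ p, (gaussianPDFReal m₁ v₁ p.1 * gaussianPDFReal m₂ v₂ p.2) • f p := by
  rw [gaussianReal_of_var_ne_zero _ hv₁, gaussianReal_of_var_ne_zero _ hv₂,
    prod_withDensity (by fun_prop) (by fun_prop), ← Measure.volume_eq_prod,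
    integral_withDensity_eq_integral_toReal_smul (by fun_prop)
      (ae_of_all _ fun _ => ENNReal.mul_lt_top gaussianPDF_lt_top gaussianPDF_lt_top)]
  simp_rw [ENNReal.toReal_mul, toReal_gaussianPDF]

theorem integral_gaussianReal_prod_polarCoord {E : Type*} [NormedAddCommGroup E]
    [NormedSpace ℝ E] (f : ℝ × ℝ → E) :
    ∫ p, f p ∂(Measure.prod γ γ) =
      ∫ p in polarCoord.target,
        (p.1 * Real.exp (-(p.1 ^ 2) / 2) / (2 * π)) • f (polarCoord.symm p) := by
  rw [integral_gaussianReal_prod one_ne_zero one_ne_zero, ← integral_comp_polarCoord_symm]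
  congr with p
  have density : gaussianPDFReal 0 1 (p.1 * Real.cos p.2) * gaussianPDFReal 0 1
      (p.1 * Real.sin p.2) = Real.exp (-(p.1 ^ 2) / 2) / (2 * π) := by
    rw [← stdPhi_eq_gaussianPDFReal, stdPhi, stdPhi, div_mul_div_comm, ← Real.exp_add,
      Real.mul_self_sqrt (by positivity)]
    congr 2
    linear_combination (-(p.1 ^ 2) / 2) * Real.cos_sq_add_sin_sq p.2
  rw [polarCoord_symm_apply, density, smul_smul, mul_div_assoc]

theorem integral_Ioi_mul_exp_neg_sq_div_two :
    ∫ r in Set.Ioi (0 : ℝ), r * Real.exp (-(r ^ 2) / 2) = 1 := by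
  calc ∫ r in Set.Ioi (0 : ℝ), r * Real.exp (-(r ^ 2) / 2)
      = ∫ r in Set.Ioi (0 : ℝ), r ^ (1 : ℝ) * Real.exp (-(1 / 2) * r ^ (2 : ℝ)) := by
        congr with r
        rw [Real.rpow_one, Real.rpow_two, neg_mul, one_div_mul_eq_div, neg_div]
    _ = 1 := by
        rw [integral_rpow_mul_exp_neg_mul_rpow two_pos (by norm_num) one_half_pos]
        norm_num [Real.rpow_neg_one]

theorem gaussianReal_prod_real_cone {S : Set (ℝ × ℝ)} {A : Set ℝ} (hS : MeasurableSet S)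
    (hA : MeasurableSet A) (hAπ : A ⊆ Set.Ioo (-π) π)
    (hSA : ∀ r > 0, ∀ θ ∈ Set.Ioo (-π) π, (r * Real.cos θ, r * Real.sin θ) ∈ S ↔ θ ∈ A) :
    (Measure.prod γ γ).real S = volume.real A / (2 * π) := by
  have polar_indicator : ∀ p ∈ polarCoord.target,
      (p.1 * Real.exp (-(p.1 ^ 2) / 2) / (2 * π)) • S.indicator (1 : ℝ × ℝ → ℝ)
        (polarCoord.symm p) =
      p.1 * Real.exp (-(p.1 ^ 2) / 2) * (A.indicator 1 p.2 / (2 * π)) := by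
    rintro ⟨r, θ⟩ ⟨hr, hθ⟩
    have hind : S.indicator (1 : ℝ × ℝ → ℝ) (r * Real.cos θ, r * Real.sin θ) =
        A.indicator 1 θ :=
      Set.indicator_const_eq_indicator_const (hSA r hr θ hθ)
    rw [polarCoord_symm_apply, hind, smul_eq_mul]
    ring
  rw [← integral_indicator_one hS, integral_gaussianReal_prod_polarCoord,
    setIntegral_congr_fun polarCoord.open_target.measurableSet polar_indicator,
    polarCoord_target, Measure.volume_eq_prod,
    setIntegral_prod_mul (fun r : ℝ => r * Real.exp (-(r ^ 2) / 2))
      (fun θ => A.indicator 1 θ / (2 * π)),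
    integral_Ioi_mul_exp_neg_sq_div_two, one_mul, integral_div, integral_indicator_one hA,
    measureReal_restrict_apply hA, Set.inter_eq_left.2 hAπ]

theorem cos_nonneg_and_sin_le_mul_cos_iff (k : ℝ) {θ : ℝ} (hθ : θ ∈ Set.Ioo (-π) π) :
    0 ≤ Real.cos θ ∧ Real.sin θ ≤ k * Real.cos θ ↔ θ ∈ Set.Icc (-(π / 2)) (Real.arctan k) := by
  have hk := Real.cos_arctan_pos k
  have hkπ := Real.arctan_mem_Ioo k
  have sin_sub : Real.sin (Real.arctan k - θ) =
      Real.cos (Real.arctan k) * (k * Real.cos θ - Real.sin θ) := by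
    rw [Real.sin_sub, ← Real.tan_mul_cos hk.ne', Real.tan_arctan]
    ring
  have sin_le_iff : Real.sin θ ≤ k * Real.cos θ ↔ 0 ≤ Real.sin (Real.arctan k - θ) := by
    rw [sin_sub, mul_nonneg_iff_of_pos_left hk, sub_nonneg]
  rw [sin_le_iff]
  constructor
  · rintro ⟨hcos, hsin⟩
    have hθ' : |θ| ≤ π / 2 := by
      by_contra! h
      refine hcos.not_gt ?_
      rw [← Real.cos_abs]
      exact Real.cos_neg_of_pi_div_two_lt_of_lt h
        (by linarith [abs_lt.2 hθ, Real.pi_pos])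
    refine ⟨(abs_le.1 hθ').1, ?_⟩
    by_contra! h
    exact hsin.not_gt (Real.sin_neg_of_neg_of_neg_pi_lt (by linarith)
      (by linarith [hkπ.1, (abs_le.1 hθ').2]))
  · rintro ⟨h₁, h₂⟩
    exact ⟨Real.cos_nonneg_of_neg_pi_div_two_le_of_le h₁ (by linarith [hkπ.2]),
      Real.sin_nonneg_of_nonneg_of_le_pi (by linarith) (by linarith [hkπ.2])⟩

theorem gaussianReal_prod_real_wedge (k : ℝ) :
    (Measure.prod γ γ).real {p | 0 ≤ p.1 ∧ p.2 ≤ k * p.1} =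
      1 / 4 + Real.arctan k / (2 * π) := by
  have hS : MeasurableSet {p : ℝ × ℝ | 0 ≤ p.1 ∧ p.2 ≤ k * p.1} :=
    (measurableSet_le measurable_const measurable_fst).inter
      (measurableSet_le measurable_snd (by fun_prop))
  have hA : Set.Icc (-(π / 2)) (Real.arctan k) ⊆ Set.Ioo (-π) π :=
    Set.Icc_subset_Ioo (by linarith [Real.pi_pos])
      (by linarith [Real.pi_pos, Real.arctan_lt_pi_div_two k])
  rw [gaussianReal_prod_real_cone hS measurableSet_Icc hA, Real.volume_real_Icc_of_le
    (Real.neg_pi_div_two_lt_arctan k).le]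
  · field_simp
    ring
  · intro r hr θ hθ
    rw [← cos_nonneg_and_sin_le_mul_cos_iff k hθ, Set.mem_ofPred_eq, mul_nonneg_iff_of_pos_left hr,
      mul_left_comm, mul_le_mul_iff_right₀ hr]

theorem setIntegral_Ici_cdf_gaussianReal_mul (k : ℝ) :
    ∫ x in Set.Ici 0, cdf γ (k * x) ∂γ = 1 / 4 + Real.arctan k / (2 * π) := by
  have hS : MeasurableSet {p : ℝ × ℝ | p.2 ≤ k * p.1} :=
    measurableSet_le measurable_snd (by fun_prop)
  calc ∫ x in Set.Ici 0, cdf γ (k * x) ∂γ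
      = ((Measure.restrict γ (Set.Ici 0)).prod γ).real {p | p.2 ≤ k * p.1} := by
        simpa using integral_cdf_comp_mul_eq_setIntegral_prod
          (μ := Measure.restrict γ (Set.Ici 0)) (ν := γ) (f := fun x => k * x) (by fun_prop)
          (integrable_const (1 : ℝ))
    _ = (Measure.prod γ γ).real {p | 0 ≤ p.1 ∧ p.2 ≤ k * p.1} := by
        rw [Measure.restrict_prod_eq_prod_univ, measureReal_restrict_apply hS]
        congr 1
        ext p
        simp [and_comm]
    _ = 1 / 4 + Real.arctan k / (2 * π) := gaussianReal_prod_real_wedge k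

theorem integral_cdf_mul_gaussianReal_eq_setIntegral_Ici {g : ℝ → ℝ} (hg : Integrable g γ) :
    ∫ x, cdf γ x * g x ∂γ = ∫ x in Set.Ici 0, ∫ y, g ((x + y) / √2) ∂γ ∂γ := by
  have rotation_fst (q : ℝ × ℝ) :
      (ContinuousLinearMap.rotation (π / 4) q).1 = (q.1 + q.2) / √2 := by
    simp only [ContinuousLinearMap.rotation_apply, Real.cos_pi_div_four, Real.sin_pi_div_four,
      smul_eq_mul, Real.sqrt_div_self']
    ring
  have half_plane_preimage : ContinuousLinearMap.rotation (π / 4) ⁻¹' {p : ℝ × ℝ | p.2 ≤ p.1} =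
      Set.Ici 0 ×ˢ Set.univ := by
    ext q
    simp [ContinuousLinearMap.rotation_apply]
  have measurePreserving_rotation : MeasurePreserving (ContinuousLinearMap.rotation (π / 4))
      (Measure.prod γ γ) (Measure.prod γ γ) :=
    ⟨by fun_prop, map_rotation_gaussianReal_prod _⟩
  have hg_rotation : Integrable (fun q : ℝ × ℝ => g ((q.1 + q.2) / √2)) (Measure.prod γ γ) := by
    simp_rw [← rotation_fst]
    exact measurePreserving_rotation.integrable_comp_of_integrable (hg.comp_fst γ)
  calc ∫ x, cdf γ x * g x ∂γ
      = ∫ p in {p : ℝ × ℝ | p.2 ≤ p.1}, g p.1 ∂(Measure.prod γ γ) :=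
        integral_cdf_comp_mul_eq_setIntegral_prod measurable_id hg
    _ = ∫ q in Set.Ici 0 ×ˢ Set.univ, g ((q.1 + q.2) / √2) ∂(Measure.prod γ γ) := by
        have hg_map : AEStronglyMeasurable (fun p : ℝ × ℝ => g p.1)
            ((Measure.prod γ γ).map (ContinuousLinearMap.rotation (π / 4))) := by
          rw [measurePreserving_rotation.map_eq]
          exact (hg.comp_fst γ).aestronglyMeasurable
        rw [← half_plane_preimage, ← measurePreserving_rotation.map_eq,
          setIntegral_map (measurableSet_le measurable_snd measurable_fst) hg_map
            measurePreserving_rotation.aemeasurable, measurePreserving_rotation.map_eq]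
        simp_rw [rotation_fst]
    _ = ∫ x in Set.Ici 0, ∫ y, g ((x + y) / √2) ∂γ ∂γ := by
        rw [setIntegral_prod _ hg_rotation.integrableOn, Measure.restrict_univ]

theorem integrable_cdf_comp {α : Type*} [MeasurableSpace α] {μ : Measure α} [IsFiniteMeasure μ]
    (ν : Measure ℝ) {f : α → ℝ} (hf : Measurable f) : Integrable (fun x => cdf ν (f x)) μ :=
  Integrable.of_bound ((monotone_cdf ν).measurable.comp hf).aestronglyMeasurable 1 <|
    ae_of_all _ fun x => by
      rw [Real.norm_of_nonneg (cdf_nonneg ν _)]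
      exact cdf_le_one ν _

theorem arctan_div_sqrt_eq_arcsin {q : ℝ} (hq : 0 < q) (c : ℝ) :
    Real.arctan (c / √q) = Real.arcsin (c / √(q + c ^ 2)) := by
  have hsqrt : √q * √(1 + (c / √q) ^ 2) = √(q + c ^ 2) := by
    rw [← Real.sqrt_mul hq.le, div_pow, Real.sq_sqrt hq.le, mul_add, mul_one,
      mul_div_cancel₀ _ hq.ne']
  rw [Real.arctan_eq_arcsin, div_div, hsqrt]

theorem integral_cdf_mul_cdf_const_mul_gaussianReal (c : ℝ) :
    ∫ x, cdf γ x * cdf γ (c * x) ∂γ =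
      1 / 4 + Real.arcsin (c / √(2 * (1 + c ^ 2))) / (2 * π) := by
  have slope (x : ℝ) : c / √2 * x / √(1 + (c / √2) ^ 2) = c / √(2 + c ^ 2) * x := by
    have : 2 + c ^ 2 = 2 * (1 + (c / √2) ^ 2) := by
      rw [div_pow, Real.sq_sqrt zero_le_two]
      ring
    rw [this, Real.sqrt_mul zero_le_two]
    field_simp
  calc ∫ x, cdf γ x * cdf γ (c * x) ∂γ
      = ∫ x in Set.Ici 0, ∫ y, cdf γ (c * ((x + y) / √2)) ∂γ ∂γ :=
        integral_cdf_mul_gaussianReal_eq_setIntegral_Ici (integrable_cdf_comp γ (by fun_prop))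
    _ = ∫ x in Set.Ici 0, ∫ y, cdf γ (c / √2 * y + c / √2 * x) ∂γ ∂γ := by
        congr with x
        congr with y
        congr 1
        ring
    _ = ∫ x in Set.Ici 0, cdf γ (c / √(2 + c ^ 2) * x) ∂γ := by
        simp_rw [integral_cdf_gaussianReal_mul_add, slope]
    _ = 1 / 4 + Real.arcsin (c / √(2 * (1 + c ^ 2))) / (2 * π) := by
        rw [setIntegral_Ici_cdf_gaussianReal_mul, arctan_div_sqrt_eq_arcsin (by positivity),
          show 2 + c ^ 2 + c ^ 2 = 2 * (1 + c ^ 2) by ring]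

theorem integral_integral_cdf_mul_cdf_gaussianReal (a b : ℝ) :
    ∫ x, ∫ y, cdf γ x * cdf γ (a * x + b * y) ∂γ ∂γ =
      1 / 4 + Real.arcsin (a / √(2 * (1 + a ^ 2 + b ^ 2))) / (2 * π) := by
  have hsqrt : √(1 + b ^ 2) * √(2 * (1 + (a / √(1 + b ^ 2)) ^ 2)) =
      √(2 * (1 + a ^ 2 + b ^ 2)) := by
    have hb : 0 < 1 + b ^ 2 := by positivity
    rw [← Real.sqrt_mul hb.le, div_pow, Real.sq_sqrt hb.le]
    congr 1
    field_simp
    ring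
  calc ∫ x, ∫ y, cdf γ x * cdf γ (a * x + b * y) ∂γ ∂γ
      = ∫ x, cdf γ x * cdf γ (a / √(1 + b ^ 2) * x) ∂γ := by
        simp_rw [integral_const_mul, add_comm (a * _), integral_cdf_gaussianReal_mul_add,
          mul_div_right_comm]
    _ = 1 / 4 + Real.arcsin (a / √(2 * (1 + a ^ 2 + b ^ 2))) / (2 * π) := by
        rw [integral_cdf_mul_cdf_const_mul_gaussianReal, div_div, hsqrt]

theorem gaussian_cdf_identities_general :
    (∀ a b : ℝ, ∫ x, stdCdf (a * x + b) ∂γ = stdCdf (b / √(1 + a ^ 2))) ∧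
    (∀ a b : ℝ, ∫ x, ∫ y, stdCdf x * stdCdf (a * x + b * y) ∂γ ∂γ =
      1 / 4 + Real.arcsin (a / √(2 * (1 + a ^ 2 + b ^ 2))) / (2 * π)) := by
  simp_rw [stdCdf_eq_cdf]
  exact ⟨integral_cdf_gaussianReal_mul_add, integral_integral_cdf_mul_cdf_gaussianReal⟩

/-- Gaussian identities for the standard normal distribution function `Φ`:
(a) `∫ Φ(x + t) dγ(x) = Φ(t/√2)`;
(b) `h_{Φ,Φ}(ρ) = 1/4 + arcsin(ρ/2)/(2π)` for `ρ ∈ [-1,1]`. -/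
theorem gaussian_cdf_identities :
    (∀ t : ℝ, ∫ x, stdCdf (x + t) ∂(gaussianReal 0 1) = stdCdf (t / Real.sqrt 2)) ∧
    (∀ ρ ∈ Set.Icc (-1 : ℝ) 1,
      ∫ x, ∫ y, stdCdf x * stdCdf (ρ * x + Real.sqrt (1 - ρ ^ 2) * y)
          ∂(gaussianReal 0 1) ∂(gaussianReal 0 1) =
        1 / 4 + Real.arcsin (ρ / 2) / (2 * Real.pi)) := by
  refine ⟨fun t => by simpa [one_add_one_eq_two] using gaussian_cdf_identities_general.1 1 t,
    fun ρ hρ => ?_⟩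
  have hρ_sq : ρ ^ 2 ≤ 1 := (sq_le_one_iff_abs_le_one ρ).2 (abs_le.2 hρ)
  have norm_eq_two : √(2 * (1 + ρ ^ 2 + √(1 - ρ ^ 2) ^ 2)) = 2 := by
    rw [Real.sq_sqrt (sub_nonneg.2 hρ_sq), show 2 * (1 + ρ ^ 2 + (1 - ρ ^ 2)) = 2 ^ 2 by ring,
      Real.sqrt_sq zero_le_two]
  rw [gaussian_cdf_identities_general.2, norm_eq_two]
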